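/- Let E be a real normed vector space, f : E → E a continuous open map, U ⊆ E a nonempty open set with f(U) ⊆ U, and A = ⋃_{n≥0} f^{-n}(U). Then the topological boundary ∂A equals the accumulation set of the sets f^{-n}(∂U), i.e. ∂A = { x ∈ E : there exist a sequence n_k → ∞ and points x_k ∈ f^{-n_k}(∂U) with x_k → x }. -/

import Mathlib

open Filter Topology

theorem IsOpenMap.iterate {X : Type*} [TopologicalSpace X] {f : X → X} (hf : IsOpenMap f)
    (n : ℕ) : IsOpenMap f^[n] := by
  induction n with
  | zero => exact IsOpenMap.id
  | succ n ih => exact ih.comp hf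

/-- A preconnected set meeting both `s` and its complement meets the frontier of `s`. -/
theorem IsPreconnected.inter_frontier_nonempty {X : Type*} [TopologicalSpace X] {t s : Set X}
    (ht : IsPreconnected t) (hs : (t ∩ s).Nonempty) (hsc : (t ∩ sᶜ).Nonempty) :
    (t ∩ frontier s).Nonempty := by
  by_contra h
  have hfr (x : X) (hx : x ∈ t) : x ∉ frontier s := fun hx' => h ⟨x, hx, hx'⟩
  have hcover (x : X) (hx : x ∈ t) : x ∈ interior s ∨ x ∈ (closure s)ᶜ := by
    by_contra! hcon
    exact hfr x hx ⟨not_not.1 hcon.2, hcon.1⟩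
  obtain ⟨a, hat, has⟩ := hs
  obtain ⟨b, hbt, hbs⟩ := hsc
  obtain ⟨z, -, hzi, hzc⟩ := ht _ _ isOpen_interior isClosed_closure.isOpen_compl hcover
    ⟨a, hat, (hcover a hat).resolve_right fun h => h (subset_closure has)⟩
    ⟨b, hbt, (hcover b hbt).resolve_left fun h => hbs (interior_subset h)⟩
  exact hzc (subset_closure (interior_subset hzi))

/-- for a continuous open self-map `f` of a real normed space, a nonempty
open set `U` with `f(U) ⊆ U`, and `A = ⋃_{n≥0} f^{-n}(U)`, the boundary `∂A` equals the
accumulation set of the sets `f^{-n}(∂U)` as `n → ∞`. -/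
theorem stmt7 {E : Type*} [NormedAddCommGroup E] [NormedSpace ℝ E]
    (f : E → E) (hc : Continuous f) (ho : IsOpenMap f)
    (U : Set E) (hU : IsOpen U) (hne : U.Nonempty) (hinv : f '' U ⊆ U) :
    frontier (⋃ n : ℕ, f^[n] ⁻¹' U) =
      {x : E | ∃ (nk : ℕ → ℕ) (xk : ℕ → E),
        Tendsto nk atTop atTop ∧
        (∀ k : ℕ, xk k ∈ f^[nk k] ⁻¹' frontier U) ∧
        Tendsto xk atTop (𝓝 x)} := by
  have hmono : Monotone fun n : ℕ => f^[n] ⁻¹' U := by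
    refine monotone_nat_of_le_succ fun n x hx => ?_
    simp only [Set.mem_preimage, Function.iterate_succ_apply'] at hx ⊢
    exact hinv ⟨_, hx, rfl⟩
  have hopen (n : ℕ) : IsOpen (f^[n] ⁻¹' U) := hU.preimage (hc.iterate n)
  have hfr (n : ℕ) : f^[n] ⁻¹' frontier U = frontier (f^[n] ⁻¹' U) :=
    (ho.iterate n).preimage_frontier_eq_frontier_preimage (hc.iterate n) U
  simp only [hfr]
  ext x
  constructor
  · intro hx
    rw [(isOpen_iUnion hopen).frontier_eq] at hx
    have hnear (k : ℕ) : ∃ n ≥ k, ∃ y ∈ frontier (f^[n] ⁻¹' U),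
        dist y x < 1 / ((k : ℝ) + 1) := by
      have hpos : 0 < 1 / ((k : ℝ) + 1) := Nat.one_div_pos_of_nat
      obtain ⟨y, hyA, hyx⟩ := Metric.mem_closure_iff.1 hx.1 _ hpos
      obtain ⟨N, hN⟩ := Set.mem_iUnion.1 hyA
      obtain ⟨z, hz, hzf⟩ := (convex_ball x (1 / ((k : ℝ) + 1))).isPreconnected
        |>.inter_frontier_nonempty
          ⟨y, Metric.mem_ball'.2 hyx, hmono (le_max_left N k) hN⟩
          ⟨x, Metric.mem_ball_self hpos,
            fun h => hx.2 (Set.mem_iUnion.2 ⟨max N k, h⟩)⟩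
      exact ⟨max N k, le_max_right N k, z, hzf, hz⟩
    choose nk hnk xk hxk hdist using hnear
    exact ⟨nk, xk, tendsto_atTop_mono hnk tendsto_id, hxk,
      tendsto_iff_dist_tendsto_zero.2 <| squeeze_zero (fun _ => dist_nonneg)
        (fun k => (hdist k).le) tendsto_one_div_add_atTop_nhds_zero_nat⟩
  · rintro ⟨nk, xk, hnk, hxk, hlim⟩
    rw [(isOpen_iUnion hopen).frontier_eq]
    refine ⟨isClosed_closure.mem_of_tendsto hlim <| Eventually.of_forall fun k =>
      closure_mono (Set.subset_iUnion _ (nk k)) (frontier_subset_closure (hxk k)), ?_⟩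
    intro hxA
    obtain ⟨N, hN⟩ := Set.mem_iUnion.1 hxA
    obtain ⟨k, hk, hNk⟩ := ((hlim.eventually ((hopen N).mem_nhds hN)).and
      (hnk.eventually_ge_atTop N)).exists
    have hfk := hxk k
    rw [(hopen (nk k)).frontier_eq] at hfk
    exact hfk.2 (hmono hNk hk)
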